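/- arXiv:2310.19118 — 2 statements merged into one kernel-verified Lean document; each statement's English description precedes it below -/
import Mathlib

section
/- Let n ≥ 1, s ∈ (0,1), and let u, v : ℝⁿ → ℝ be Schwartz functions. Define (−Δ)^s u(x) := (c_{n,s}/2) ∫_{ℝⁿ} (2u(x) − u(x+y) − u(x−y))/|y|^{n+2s} dy (an absolutely convergent integral), and similarly for v. Then ∫_{ℝⁿ} ((−Δ)^s u)(x) · v(x) dx = ∫_{ℝⁿ} u(x) · ((−Δ)^s v)(x) dx, both integrals being absolutely convergent; i.e., the fractional Laplacian is symmetric (integration by parts formula). -/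
open MeasureTheory Filter Metric Set
open scoped Topology

/-- The normalization constant `c_{n,s} = (∫_{ℝⁿ} (1 − cos ζ₁)/|ζ|^{n+2s} dζ)⁻¹`. -/
noncomputable def fracC (n : ℕ) (hn : 1 ≤ n) (s : ℝ) : ℝ :=
  (∫ ζ : EuclideanSpace ℝ (Fin n),
    (1 - Real.cos (ζ ⟨0, hn⟩)) / ‖ζ‖ ^ ((n : ℝ) + 2 * s))⁻¹

/-- The fractional Laplacian in its second-difference form. -/
noncomputable def fracLap (n : ℕ) (hn : 1 ≤ n) (s : ℝ)
    (u : EuclideanSpace ℝ (Fin n) → ℝ) (x : EuclideanSpace ℝ (Fin n)) : ℝ :=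
  fracC n hn s / 2 *
    ∫ y : EuclideanSpace ℝ (Fin n),
      (2 * u x - u (x + y) - u (x - y)) / ‖y‖ ^ ((n : ℝ) + 2 * s)

/-- The dominating kernel is integrable. -/
theorem frac_kernel_integrable (n : ℕ) (hn : 1 ≤ n) (s : ℝ) (hs : s ∈ Set.Ioo (0:ℝ) 1) :
    Integrable (fun y : EuclideanSpace ℝ (Fin n) =>
      min 1 (‖y‖ ^ 2) / ‖y‖ ^ ((n : ℝ) + 2 * s)) := by
  obtain ⟨hs0, hs1⟩ := hs
  have : Nonempty (Fin n) := ⟨⟨0, hn⟩⟩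
  have : Nontrivial (EuclideanSpace ℝ (Fin n)) := by
    apply Module.nontrivial_of_finrank_pos (R := ℝ)
    simp only [finrank_euclideanSpace, Fintype.card_fin]
    omega
  have key := integrable_fun_norm_addHaar
    (volume : Measure (EuclideanSpace ℝ (Fin n)))
    (f := fun r : ℝ => min 1 (r ^ 2) / r ^ ((n : ℝ) + 2 * s))
  refine key.2 ?_
  simp only [finrank_euclideanSpace, Fintype.card_fin, smul_eq_mul]
  have hpow : ∀ r : ℝ, 0 < r → r ^ (n - 1) / r ^ ((n : ℝ) + 2 * s) = r ^ (-1 - 2 * s) := by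
    intro r hr
    rw [← Real.rpow_natCast, ← Real.rpow_sub hr, Nat.cast_sub hn]
    congr 1
    push_cast
    ring
  rw [← Ioc_union_Ioi_eq_Ioi (zero_le_one' ℝ)]
  refine IntegrableOn.union ?_ ?_
  · have h1 : IntegrableOn (fun r : ℝ => r ^ (1 - 2 * s)) (Ioc 0 1) := by
      rw [← intervalIntegrable_iff_integrableOn_Ioc_of_le zero_le_one]
      exact intervalIntegral.intervalIntegrable_rpow' (by linarith)
    refine h1.congr_fun ?_ measurableSet_Ioc
    intro r hr
    have hr0 : 0 < r := hr.1
    have : min 1 (r ^ 2) = r ^ 2 := min_eq_right (by nlinarith [hr.1, hr.2])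
    simp only [this]
    rw [show r ^ (n - 1) * (r ^ 2 / r ^ ((n : ℝ) + 2 * s))
      = r ^ 2 * (r ^ (n - 1) / r ^ ((n : ℝ) + 2 * s)) by ring, hpow r hr0,
      ← Real.rpow_natCast, ← Real.rpow_add hr0]
    congr 1
    push_cast
    ring
  · have h1 : IntegrableOn (fun r : ℝ => r ^ (-1 - 2 * s)) (Ioi 1) :=
      integrableOn_Ioi_rpow_of_lt (by linarith) one_pos
    refine h1.congr_fun ?_ measurableSet_Ioi
    intro r hr
    have hr1 : 1 < r := hr
    have : min 1 (r ^ 2) = 1 := min_eq_left (by nlinarith)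
    simp only [this]
    rw [← hpow r (by linarith)]
    ring

theorem schwartz_bounded {E F : Type*} [NormedAddCommGroup E] [NormedSpace ℝ E]
    [NormedAddCommGroup F] [NormedSpace ℝ F] (f : SchwartzMap E F) :
    ∃ C : ℝ, 0 < C ∧ ∀ x, ‖f x‖ ≤ C := by
  obtain ⟨C, hC, h⟩ := f.decay 0 0
  exact ⟨C, hC, fun x => by simpa using h x⟩

theorem schwartz_lipschitz {E F : Type*} [NormedAddCommGroup E] [NormedSpace ℝ E]
    [NormedAddCommGroup F] [NormedSpace ℝ F] (f : SchwartzMap E F) :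
    ∃ C : ℝ, 0 < C ∧ ∀ x y, ‖f y - f x‖ ≤ C * ‖y - x‖ := by
  obtain ⟨C, hC, h⟩ := schwartz_bounded (SchwartzMap.fderivCLM ℝ E F f)
  refine ⟨C, hC, fun x y => ?_⟩
  exact convex_univ.norm_image_sub_le_of_norm_hasFDerivWithin_le (𝕜 := ℝ)
    (fun z _ => (f.hasFDerivAt z).hasFDerivWithinAt)
    (fun z _ => h z) (mem_univ _) (mem_univ _)

theorem schwartz_second_diff {E : Type*} [NormedAddCommGroup E] [NormedSpace ℝ E]
    (f : SchwartzMap E ℝ) :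
    ∃ C : ℝ, 0 < C ∧ ∀ x y, |2 * f x - f (x + y) - f (x - y)| ≤ C * min 1 (‖y‖ ^ 2) := by
  obtain ⟨A, hA, hb⟩ := schwartz_bounded f
  obtain ⟨B, hB, hl⟩ := schwartz_lipschitz (SchwartzMap.fderivCLM ℝ E ℝ f)
  have h1 : ∀ x y, |2 * f x - f (x + y) - f (x - y)| ≤ 4 * A := by
    intro x y
    have a1 := abs_le.1 (hb x)
    have a2 := abs_le.1 (hb (x + y))
    have a3 := abs_le.1 (hb (x - y))
    rw [abs_le]
    constructor <;> linarith
  have h2 : ∀ x y, |2 * f x - f (x + y) - f (x - y)| ≤ 2 * B * ‖y‖ ^ 2 := by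
    intro x y
    have hd : ∀ z : E, HasFDerivAt (fun z => f (x + z) + f (x - z))
        (fderiv ℝ f (x + z) - fderiv ℝ f (x - z)) z := by
      intro z
      have d1 : HasFDerivAt (fun z => f (x + z)) (fderiv ℝ f (x + z)) z := by
        have := (f.hasFDerivAt (x + z)).comp z ((hasFDerivAt_id z).const_add x)
        exact this.congr_fderiv (by ext w; simp)
      have d2 : HasFDerivAt (fun z => f (x - z)) (-fderiv ℝ f (x - z)) z := by
        have := (f.hasFDerivAt (x - z)).comp z ((hasFDerivAt_id z).const_sub x)
        exact this.congr_fderiv (by ext w; simp)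
      exact (d1.add d2).congr_fderiv (sub_eq_add_neg _ _).symm
    have hbd : ∀ z ∈ closedBall (0 : E) ‖y‖,
        ‖fderiv ℝ f (x + z) - fderiv ℝ f (x - z)‖ ≤ 2 * B * ‖y‖ := by
      intro z hz
      have hz' : ‖z‖ ≤ ‖y‖ := by simpa using hz
      have := hl (x - z) (x + z)
      simp only [SchwartzMap.fderivCLM_apply] at this
      have e : ‖(x + z) - (x - z)‖ ≤ 2 * ‖z‖ := by
        rw [show (x + z) - (x - z) = z + z by abel, two_mul]
        exact norm_add_le _ _
      nlinarith [norm_nonneg z]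
    have := (convex_closedBall (0 : E) ‖y‖).norm_image_sub_le_of_norm_hasFDerivWithin_le (𝕜 := ℝ)
      (fun z _ => (hd z).hasFDerivWithinAt) hbd
      (x := 0) (y := y) (by simp) (by simp)
    simp only [add_zero, sub_zero, Real.norm_eq_abs] at this
    rw [abs_sub_comm] at this
    calc |2 * f x - f (x + y) - f (x - y)| = |f x + f x - (f (x + y) + f (x - y))| := by
          congr 1; ring
      _ ≤ 2 * B * ‖y‖ * ‖y‖ := this
      _ = _ := by ring
  refine ⟨4 * A + 2 * B, by positivity, fun x y => ?_⟩
  rcases le_total 1 (‖y‖ ^ 2) with h | h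
  · rw [min_eq_left h]
    linarith [h1 x y]
  · rw [min_eq_right h]
    nlinarith [h2 x y, sq_nonneg ‖y‖]

theorem frac_inner_meas (n : ℕ) (s : ℝ)
    (u : SchwartzMap (EuclideanSpace ℝ (Fin n)) ℝ) :
    Measurable (fun z : EuclideanSpace ℝ (Fin n) × EuclideanSpace ℝ (Fin n) =>
      (2 * u z.1 - u (z.1 + z.2) - u (z.1 - z.2)) / ‖z.2‖ ^ ((n : ℝ) + 2 * s)) := by
  have hu := u.continuous
  refine Measurable.div ?_ ?_
  · exact Continuous.measurable (by fun_prop)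
  · exact measurable_snd.norm.pow_const _

theorem frac_inner_bound (n : ℕ) (s : ℝ)
    (u : SchwartzMap (EuclideanSpace ℝ (Fin n)) ℝ) :
    ∃ C : ℝ, 0 < C ∧ ∀ x y : EuclideanSpace ℝ (Fin n),
      ‖(2 * u x - u (x + y) - u (x - y)) / ‖y‖ ^ ((n : ℝ) + 2 * s)‖
        ≤ C * (min 1 (‖y‖ ^ 2) / ‖y‖ ^ ((n : ℝ) + 2 * s)) := by
  obtain ⟨C, hC, h⟩ := schwartz_second_diff u
  refine ⟨C, hC, fun x y => ?_⟩
  have hp : 0 ≤ ‖y‖ ^ ((n : ℝ) + 2 * s) := by positivity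
  rw [norm_div, Real.norm_eq_abs, Real.norm_of_nonneg hp, ← mul_div_assoc]
  exact div_le_div_of_nonneg_right (h x y) hp

theorem frac_inner_integrable (n : ℕ) (hn : 1 ≤ n) (s : ℝ) (hs : s ∈ Set.Ioo (0:ℝ) 1)
    (u : SchwartzMap (EuclideanSpace ℝ (Fin n)) ℝ) (x : EuclideanSpace ℝ (Fin n)) :
    Integrable (fun y : EuclideanSpace ℝ (Fin n) =>
        (2 * u x - u (x + y) - u (x - y)) / ‖y‖ ^ ((n : ℝ) + 2 * s)) := by
  obtain ⟨C, hC, h⟩ := frac_inner_bound n s u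
  refine ((frac_kernel_integrable n hn s hs).const_mul C).mono'
    ((frac_inner_meas n s u).comp measurable_prodMk_left).aestronglyMeasurable
    (Eventually.of_forall (h x))

theorem frac_prod_integrable (n : ℕ) (hn : 1 ≤ n) (s : ℝ) (hs : s ∈ Set.Ioo (0:ℝ) 1)
    (u v : SchwartzMap (EuclideanSpace ℝ (Fin n)) ℝ) :
    Integrable (fun z : EuclideanSpace ℝ (Fin n) × EuclideanSpace ℝ (Fin n) =>
      v z.1 * ((2 * u z.1 - u (z.1 + z.2) - u (z.1 - z.2)) / ‖z.2‖ ^ ((n : ℝ) + 2 * s)))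
      (volume.prod volume) := by
  obtain ⟨C, hC, h⟩ := frac_inner_bound n s u
  have hv : Integrable (fun x => ‖v x‖) (volume : Measure (EuclideanSpace ℝ (Fin n))) :=
    v.integrable.norm
  refine (hv.mul_prod ((frac_kernel_integrable n hn s hs).const_mul C)).mono' ?_ ?_
  · exact ((v.continuous.measurable.comp measurable_fst).mul
      (frac_inner_meas n s u)).aestronglyMeasurable
  · refine Eventually.of_forall fun z => ?_
    rw [norm_mul]
    exact mul_le_mul_of_nonneg_left (h z.1 z.2) (norm_nonneg _)

theorem schwartz_mul_shift_integrable (n : ℕ)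
    (u v : SchwartzMap (EuclideanSpace ℝ (Fin n)) ℝ) (y : EuclideanSpace ℝ (Fin n)) :
    Integrable (fun x => v x * u (x + y)) := by
  obtain ⟨A, hA, hb⟩ := schwartz_bounded u
  have hu := u.continuous
  have hv := v.continuous
  refine (v.integrable.norm.mul_const A).mono'
    (Continuous.aestronglyMeasurable (by fun_prop)) (Eventually.of_forall fun x => ?_)
  rw [norm_mul]
  exact mul_le_mul_of_nonneg_left (hb _) (norm_nonneg _)

theorem schwartz_shift (n : ℕ)
    (u v : SchwartzMap (EuclideanSpace ℝ (Fin n)) ℝ) (y : EuclideanSpace ℝ (Fin n)) :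
    ∫ x, v x * u (x + y) = ∫ x, u x * v (x - y) := by
  have := integral_add_right_eq_self (μ := (volume : Measure (EuclideanSpace ℝ (Fin n))))
    (fun x => u x * v (x - y)) y
  rw [← this]
  refine integral_congr_ae (Eventually.of_forall fun x => ?_)
  simp [mul_comm]

theorem schwartz_second_diff_expand (n : ℕ)
    (u v : SchwartzMap (EuclideanSpace ℝ (Fin n)) ℝ) (y : EuclideanSpace ℝ (Fin n)) :
    ∫ x, v x * (2 * u x - u (x + y) - u (x - y))
      = 2 * (∫ x, v x * u x) - (∫ x, v x * u (x + y)) - ∫ x, v x * u (x - y) := by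
  have i0 : Integrable (fun x => v x * u x) := by
    simpa using schwartz_mul_shift_integrable n u v 0
  have i1 := schwartz_mul_shift_integrable n u v y
  have i2 : Integrable (fun x => v x * u (x - y)) := by
    simpa [sub_eq_add_neg] using schwartz_mul_shift_integrable n u v (-y)
  have i3 : Integrable (fun x => 2 * (v x * u x)) := i0.const_mul 2
  have i4 : Integrable (fun x => 2 * (v x * u x) - v x * u (x + y)) := i3.sub i1
  rw [← integral_const_mul, ← integral_sub i3 i1, ← integral_sub i4 i2]
  refine integral_congr_ae (Eventually.of_forall fun x => ?_)
  simp only []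
  ring

theorem schwartz_second_diff_symm (n : ℕ)
    (u v : SchwartzMap (EuclideanSpace ℝ (Fin n)) ℝ) (y : EuclideanSpace ℝ (Fin n)) :
    ∫ x, v x * (2 * u x - u (x + y) - u (x - y))
      = ∫ x, u x * (2 * v x - v (x + y) - v (x - y)) := by
  rw [schwartz_second_diff_expand, schwartz_second_diff_expand, schwartz_shift n u v y,
    schwartz_shift n v u y]
  have : ∫ x, v x * u x = ∫ x, u x * v x := by simp only [mul_comm]
  rw [this]
  ring

theorem fracLap_mul_eq (n : ℕ) (hn : 1 ≤ n) (s : ℝ)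
    (u v : SchwartzMap (EuclideanSpace ℝ (Fin n)) ℝ) (x : EuclideanSpace ℝ (Fin n)) :
    v x * fracLap n hn s u x = fracC n hn s / 2 * ∫ y : EuclideanSpace ℝ (Fin n),
      v x * ((2 * u x - u (x + y) - u (x - y)) / ‖y‖ ^ ((n : ℝ) + 2 * s)) := by
  rw [integral_const_mul, fracLap]
  ring

theorem fracLap_mul_integrable (n : ℕ) (hn : 1 ≤ n) (s : ℝ) (hs : s ∈ Set.Ioo (0:ℝ) 1)
    (u v : SchwartzMap (EuclideanSpace ℝ (Fin n)) ℝ) :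
    Integrable (fun x => v x * fracLap n hn s u x) := by
  simp only [fracLap_mul_eq]
  exact (frac_prod_integrable n hn s hs u v).integral_prod_left.const_mul _

theorem fracLap_mul_integral (n : ℕ) (hn : 1 ≤ n) (s : ℝ) (hs : s ∈ Set.Ioo (0:ℝ) 1)
    (u v : SchwartzMap (EuclideanSpace ℝ (Fin n)) ℝ) :
    ∫ x, v x * fracLap n hn s u x = fracC n hn s / 2 * ∫ y : EuclideanSpace ℝ (Fin n),
      (∫ x, v x * (2 * u x - u (x + y) - u (x - y))) / ‖y‖ ^ ((n : ℝ) + 2 * s) := by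
  simp only [fracLap_mul_eq]
  rw [integral_const_mul]
  congr 1
  rw [integral_integral_swap (f := fun x y => v x *
    ((2 * u x - u (x + y) - u (x - y)) / ‖y‖ ^ ((n : ℝ) + 2 * s)))
    (frac_prod_integrable n hn s hs u v)]
  simp only [← mul_div_assoc, integral_div]

/-- Integration by parts formula (symmetry) for the fractional
Laplacian on Schwartz functions: all the integrals involved converge absolutely
and `∫ ((−Δ)^s u) v = ∫ u ((−Δ)^s v)`. -/
theorem fractionalLaplacian_symmetric
    (n : ℕ) (hn : 1 ≤ n) (s : ℝ) (hs : s ∈ Set.Ioo (0:ℝ) 1)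
    (u v : SchwartzMap (EuclideanSpace ℝ (Fin n)) ℝ) :
    (∀ x : EuclideanSpace ℝ (Fin n),
      MeasureTheory.Integrable (fun y : EuclideanSpace ℝ (Fin n) =>
        (2 * u x - u (x + y) - u (x - y)) / ‖y‖ ^ ((n : ℝ) + 2 * s))) ∧
    (∀ x : EuclideanSpace ℝ (Fin n),
      MeasureTheory.Integrable (fun y : EuclideanSpace ℝ (Fin n) =>
        (2 * v x - v (x + y) - v (x - y)) / ‖y‖ ^ ((n : ℝ) + 2 * s))) ∧
    MeasureTheory.Integrable (fun x : EuclideanSpace ℝ (Fin n) =>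
      fracLap n hn s (⇑u) x * v x) ∧
    MeasureTheory.Integrable (fun x : EuclideanSpace ℝ (Fin n) =>
      u x * fracLap n hn s (⇑v) x) ∧
    (∫ x : EuclideanSpace ℝ (Fin n), fracLap n hn s (⇑u) x * v x)
      = ∫ x : EuclideanSpace ℝ (Fin n), u x * fracLap n hn s (⇑v) x := by
  have h1 := fracLap_mul_integrable n hn s hs u v
  have h2 := fracLap_mul_integrable n hn s hs v u
  refine ⟨frac_inner_integrable n hn s hs u, frac_inner_integrable n hn s hs v, ?_, h2, ?_⟩
  · simpa only [mul_comm] using h1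
  · have e : ∫ x, fracLap n hn s (⇑u) x * v x = ∫ x, v x * fracLap n hn s (⇑u) x := by
      simp only [mul_comm]
    rw [e, fracLap_mul_integral n hn s hs u v, fracLap_mul_integral n hn s hs v u]
    simp only [schwartz_second_diff_symm n u v]
end

section
/- (Uniqueness for the fractional Dirichlet problem.) Let n ≥ 1, s ∈ (0,1), let Ω ⊂ ℝⁿ be a bounded open set, let f : Ω → ℝ and φ : ℝⁿ ∖ Ω → ℝ. Suppose u₁, u₂ : ℝⁿ → ℝ are bounded and continuous, satisfy u₁ = φ = u₂ on ℝⁿ ∖ Ω, and for i = 1, 2 and every x ∈ Ω the function y ↦ (2u_i(x) − u_i(x+y) − u_i(x−y))/|y|^{n+2s} is Lebesgue integrable on ℝⁿ with (c_{n,s}/2) ∫_{ℝⁿ} (2u_i(x) − u_i(x+y) − u_i(x−y))/|y|^{n+2s} dy = f(x). Then u₁ = u₂ on ℝⁿ. -/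
open MeasureTheory Filter Metric Set
open scoped Topology

lemma fd_radial_integrable (n : ℕ) (hn : 1 ≤ n) (s : ℝ) (hs : s ∈ Set.Ioo (0:ℝ) 1) :
    Integrable (fun x : EuclideanSpace ℝ (Fin n) =>
      (fun r : ℝ => min 2 (r ^ 2 / 2) / r ^ ((n : ℝ) + 2 * s)) ‖x‖) := by
  obtain ⟨hs0, hs1⟩ := hs
  have : Nonempty (Fin n) := ⟨⟨0, hn⟩⟩
  have : Nontrivial (EuclideanSpace ℝ (Fin n)) := by
    apply Module.nontrivial_of_finrank_pos (R := ℝ)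
    simp; omega
  rw [integrable_fun_norm_addHaar volume (f := fun r : ℝ => min 2 (r ^ 2 / 2) / r ^ ((n : ℝ) + 2 * s))]
  have hfr : Module.finrank ℝ (EuclideanSpace ℝ (Fin n)) = n := by simp
  rw [hfr]
  have key : ∀ r : ℝ, 0 < r → r ^ (n - 1) • (min 2 (r ^ 2 / 2) / r ^ ((n : ℝ) + 2 * s))
      = min 2 (r ^ 2 / 2) * r ^ (-1 - 2 * s) := by
    intro r hr
    have h1 : r ^ (n - 1) = r ^ ((n : ℝ) - 1) := by
      rw [← Real.rpow_natCast, Nat.cast_sub hn]; simp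
    rw [smul_eq_mul, h1, mul_div_left_comm, ← Real.rpow_sub hr]
    congr 2; ring
  rw [integrableOn_congr_fun (s := Ioi 0) (g := fun r : ℝ => min 2 (r ^ 2 / 2) * r ^ (-1 - 2 * s))
    (fun r hr => key r hr) measurableSet_Ioi]
  have hm : Measurable (fun r : ℝ => min 2 (r ^ 2 / 2) * r ^ (-1 - 2 * s)) := by fun_prop
  rw [← Ioc_union_Ioi_eq_Ioi (zero_le_one' ℝ)]
  refine IntegrableOn.union ?_ ?_
  · have h := (intervalIntegral.intervalIntegrable_rpow' (a := 0) (b := 1)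
      (r := 1 - 2 * s) (by linarith)).1
    refine Integrable.mono' h hm.aestronglyMeasurable ?_
    filter_upwards [ae_restrict_mem measurableSet_Ioc] with r hr
    have hr0 : 0 < r := hr.1
    have hp : 0 < r ^ (-1 - 2 * s) := Real.rpow_pos_of_pos hr0 _
    have e : r ^ (1 - 2 * s) = r ^ 2 * r ^ (-1 - 2 * s) := by
      rw [← Real.rpow_natCast, ← Real.rpow_add hr0]; congr 1; push_cast; ring
    rw [Real.norm_of_nonneg (by positivity), e]
    gcongr
    exact (min_le_right _ _).trans (by nlinarith)
  · have h := (integrableOn_Ioi_rpow_of_lt (a := -1 - 2 * s) (by linarith) one_pos).const_mul 2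
    refine Integrable.mono' h hm.aestronglyMeasurable ?_
    filter_upwards [ae_restrict_mem measurableSet_Ioi] with r hr
    have hr0 : 0 < r := lt_trans one_pos hr
    have hp : 0 < r ^ (-1 - 2 * s) := Real.rpow_pos_of_pos hr0 _
    rw [Real.norm_of_nonneg (by positivity)]
    gcongr
    exact min_le_left _ _

lemma fd_fracC_ne_zero (n : ℕ) (hn : 1 ≤ n) (s : ℝ) (hs : s ∈ Set.Ioo (0:ℝ) 1) :
    fracC n hn s ≠ 0 := by
  have hnn : ∀ ζ : EuclideanSpace ℝ (Fin n),
      0 ≤ (1 - Real.cos (ζ ⟨0, hn⟩)) / ‖ζ‖ ^ ((n : ℝ) + 2 * s) := by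
    intro ζ
    have := Real.cos_le_one (ζ ⟨0, hn⟩)
    exact div_nonneg (by linarith) (by positivity)
  have hint : Integrable (fun ζ : EuclideanSpace ℝ (Fin n) =>
      (1 - Real.cos (ζ ⟨0, hn⟩)) / ‖ζ‖ ^ ((n : ℝ) + 2 * s)) := by
    refine Integrable.mono' (fd_radial_integrable n hn s hs) ?_ ?_
    · apply Measurable.aestronglyMeasurable
      fun_prop
    · refine Eventually.of_forall fun ζ => ?_
      rw [Real.norm_of_nonneg (hnn ζ)]
      show _ ≤ min 2 (‖ζ‖ ^ 2 / 2) / ‖ζ‖ ^ ((n : ℝ) + 2 * s)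
      gcongr
      refine le_min ?_ ?_
      · linarith [Real.neg_one_le_cos (ζ ⟨0, hn⟩)]
      · have h1 := Real.one_sub_sq_div_two_le_cos (x := ζ ⟨0, hn⟩)
        have h2 : ‖ζ ⟨0, hn⟩‖ ≤ ‖ζ‖ := PiLp.norm_apply_le ζ _
        have h3 : (ζ ⟨0, hn⟩) ^ 2 ≤ ‖ζ‖ ^ 2 := by
          rw [← sq_abs (ζ ⟨0, hn⟩)]
          exact pow_le_pow_left₀ (abs_nonneg _) h2 2
        linarith
  unfold fracC
  refine inv_ne_zero fun h0 => ?_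
  rw [integral_eq_zero_iff_of_nonneg hnn hint] at h0
  set U : Set (EuclideanSpace ℝ (Fin n)) := {ζ | Real.cos (ζ ⟨0, hn⟩) < 1} with hU
  have hUo : IsOpen U := isOpen_lt (by fun_prop) continuous_const
  have hUne : U.Nonempty := by
    refine ⟨EuclideanSpace.single ⟨0, hn⟩ Real.pi, ?_⟩
    simp [hU]
  have hpos := hUo.measure_pos volume hUne
  have hz : volume U = 0 := by
    refine measure_mono_null ?_ (ae_iff.1 h0)
    intro ζ hζ hc
    have hζ' : Real.cos (ζ ⟨0, hn⟩) < 1 := hζ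
    have hζ0 : ζ ≠ 0 := by
      rintro rfl
      simp at hζ'
    have hn0 : 0 < ‖ζ‖ := norm_pos_iff.2 hζ0
    have : 0 < (1 - Real.cos (ζ ⟨0, hn⟩)) / ‖ζ‖ ^ ((n : ℝ) + 2 * s) :=
      div_pos (by linarith) (Real.rpow_pos_of_pos hn0 _)
    simp only [Pi.zero_apply] at hc
    linarith
  exact hpos.ne' hz

lemma fd_max_principle (n : ℕ) (hn : 1 ≤ n) (p : ℝ)
    (Ω : Set (EuclideanSpace ℝ (Fin n))) (hΩb : Bornology.IsBounded Ω)
    (w : EuclideanSpace ℝ (Fin n) → ℝ) (hw : Continuous w) (hext : ∀ x ∉ Ω, w x = 0)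
    (heq : ∀ x ∈ Ω,
      Integrable (fun y : EuclideanSpace ℝ (Fin n) =>
        (2 * w x - w (x + y) - w (x - y)) / ‖y‖ ^ p) ∧
      ∫ y : EuclideanSpace ℝ (Fin n), (2 * w x - w (x + y) - w (x - y)) / ‖y‖ ^ p = 0) :
    ∀ x, w x ≤ 0 := by
  by_contra! hcon
  obtain ⟨z, hz⟩ := hcon
  have : Nontrivial (EuclideanSpace ℝ (Fin n)) := by
    apply Module.nontrivial_of_finrank_pos (R := ℝ)
    simp; omega
  have hzΩ : z ∈ Ω := by
    by_contra h
    rw [hext z h] at hz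
    exact lt_irrefl _ hz
  have hcpt : IsCompact (closure Ω) := hΩb.isCompact_closure
  obtain ⟨x, -, hxmax⟩ := hcpt.exists_isMaxOn ⟨z, subset_closure hzΩ⟩ hw.continuousOn
  have hxpos : 0 < w x := lt_of_lt_of_le hz (hxmax (subset_closure hzΩ))
  have hxΩ : x ∈ Ω := by
    by_contra h
    rw [hext x h] at hxpos
    exact lt_irrefl _ hxpos
  have hmax : ∀ y, w y ≤ w x := by
    intro y
    by_cases hy : y ∈ Ω
    · exact hxmax (subset_closure hy)
    · rw [hext y hy]; exact hxpos.le
  obtain ⟨hint, hzero⟩ := heq x hxΩ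
  rw [integral_eq_zero_iff_of_nonneg (fun y => div_nonneg
    (by linarith [hmax (x + y), hmax (x - y)]) (by positivity)) hint] at hzero
  obtain ⟨R, hR⟩ := hΩb.subset_closedBall x
  set U : Set (EuclideanSpace ℝ (Fin n)) := {y | max R 0 < ‖y‖} with hU
  have hUo : IsOpen U := isOpen_lt continuous_const continuous_norm
  have hUne : U.Nonempty := NormedSpace.exists_lt_norm ℝ _ _
  have hpos := hUo.measure_pos volume hUne
  have hnull : volume U = 0 := by
    refine measure_mono_null ?_ (ae_iff.1 hzero)
    intro y hy hc
    have hy' : max R 0 < ‖y‖ := hy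
    obtain ⟨hy1, hy2⟩ := max_lt_iff.1 hy'
    have e1 : w (x + y) = 0 := hext _ fun h => by
      have := hR h
      simp [mem_closedBall, dist_eq_norm] at this
      linarith
    have e2 : w (x - y) = 0 := hext _ fun h => by
      have := hR h
      simp [mem_closedBall, dist_eq_norm] at this
      linarith
    have : 0 < (2 * w x - w (x + y) - w (x - y)) / ‖y‖ ^ p :=
      div_pos (by rw [e1, e2]; linarith) (Real.rpow_pos_of_pos hy2 _)
    simp only [Pi.zero_apply] at hc
    linarith
  exact hpos.ne' hnull

lemma fd_le (n : ℕ) (hn : 1 ≤ n) (s : ℝ) (hs : s ∈ Set.Ioo (0:ℝ) 1)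
    (Ω : Set (EuclideanSpace ℝ (Fin n))) (hΩb : Bornology.IsBounded Ω)
    (f : EuclideanSpace ℝ (Fin n) → ℝ) (φ : EuclideanSpace ℝ (Fin n) → ℝ)
    (u₁ u₂ : EuclideanSpace ℝ (Fin n) → ℝ)
    (h₁cont : Continuous u₁) (h₂cont : Continuous u₂)
    (h₁ext : ∀ x ∉ Ω, u₁ x = φ x) (h₂ext : ∀ x ∉ Ω, u₂ x = φ x)
    (h₁eq : ∀ x ∈ Ω,
      MeasureTheory.Integrable (fun y : EuclideanSpace ℝ (Fin n) =>
        (2 * u₁ x - u₁ (x + y) - u₁ (x - y)) / ‖y‖ ^ ((n : ℝ) + 2 * s)) ∧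
      fracC n hn s / 2 *
        ∫ y : EuclideanSpace ℝ (Fin n),
          (2 * u₁ x - u₁ (x + y) - u₁ (x - y)) / ‖y‖ ^ ((n : ℝ) + 2 * s) = f x)
    (h₂eq : ∀ x ∈ Ω,
      MeasureTheory.Integrable (fun y : EuclideanSpace ℝ (Fin n) =>
        (2 * u₂ x - u₂ (x + y) - u₂ (x - y)) / ‖y‖ ^ ((n : ℝ) + 2 * s)) ∧
      fracC n hn s / 2 *
        ∫ y : EuclideanSpace ℝ (Fin n),
          (2 * u₂ x - u₂ (x + y) - u₂ (x - y)) / ‖y‖ ^ ((n : ℝ) + 2 * s) = f x) (x) :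
    u₁ x ≤ u₂ x := by
  have hc : fracC n hn s / 2 ≠ 0 := div_ne_zero (fd_fracC_ne_zero n hn s hs) two_ne_zero
  have := fd_max_principle n hn ((n : ℝ) + 2 * s) Ω hΩb (fun x => u₁ x - u₂ x)
    (h₁cont.sub h₂cont) (fun x hx => by simp [h₁ext x hx, h₂ext x hx]) (fun x hx => by
      obtain ⟨i1, e1⟩ := h₁eq x hx
      obtain ⟨i2, e2⟩ := h₂eq x hx
      have he := mul_left_cancel₀ hc (e1.trans e2.symm)
      have hfun : (fun y : EuclideanSpace ℝ (Fin n) =>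
          (2 * (u₁ x - u₂ x) - (u₁ (x + y) - u₂ (x + y)) - (u₁ (x - y) - u₂ (x - y)))
            / ‖y‖ ^ ((n : ℝ) + 2 * s)) = fun y =>
          (2 * u₁ x - u₁ (x + y) - u₁ (x - y)) / ‖y‖ ^ ((n : ℝ) + 2 * s) -
          (2 * u₂ x - u₂ (x + y) - u₂ (x - y)) / ‖y‖ ^ ((n : ℝ) + 2 * s) := by
        funext y
        ring
      simp only [hfun]
      exact ⟨i1.sub i2, by rw [integral_sub i1 i2, he, sub_self]⟩) x
  linarith

/-- Uniqueness for the fractional Dirichlet problem.  Two bounded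
continuous functions solving pointwise (in the absolutely convergent
second-difference sense) `(−Δ)^s u = f` in a bounded open `Ω` with the same
exterior datum `φ` coincide everywhere. -/
theorem fractional_dirichlet_uniqueness
    (n : ℕ) (hn : 1 ≤ n) (s : ℝ) (hs : s ∈ Set.Ioo (0:ℝ) 1)
    (Ω : Set (EuclideanSpace ℝ (Fin n))) (hΩo : IsOpen Ω) (hΩb : Bornology.IsBounded Ω)
    (f : EuclideanSpace ℝ (Fin n) → ℝ) (φ : EuclideanSpace ℝ (Fin n) → ℝ)
    (u₁ u₂ : EuclideanSpace ℝ (Fin n) → ℝ)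
    (h₁bdd : ∃ M : ℝ, ∀ x, |u₁ x| ≤ M) (h₁cont : Continuous u₁)
    (h₂bdd : ∃ M : ℝ, ∀ x, |u₂ x| ≤ M) (h₂cont : Continuous u₂)
    (h₁ext : ∀ x ∉ Ω, u₁ x = φ x) (h₂ext : ∀ x ∉ Ω, u₂ x = φ x)
    (h₁eq : ∀ x ∈ Ω,
      MeasureTheory.Integrable (fun y : EuclideanSpace ℝ (Fin n) =>
        (2 * u₁ x - u₁ (x + y) - u₁ (x - y)) / ‖y‖ ^ ((n : ℝ) + 2 * s)) ∧
      fracC n hn s / 2 *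
        ∫ y : EuclideanSpace ℝ (Fin n),
          (2 * u₁ x - u₁ (x + y) - u₁ (x - y)) / ‖y‖ ^ ((n : ℝ) + 2 * s) = f x)
    (h₂eq : ∀ x ∈ Ω,
      MeasureTheory.Integrable (fun y : EuclideanSpace ℝ (Fin n) =>
        (2 * u₂ x - u₂ (x + y) - u₂ (x - y)) / ‖y‖ ^ ((n : ℝ) + 2 * s)) ∧
      fracC n hn s / 2 *
        ∫ y : EuclideanSpace ℝ (Fin n),
          (2 * u₂ x - u₂ (x + y) - u₂ (x - y)) / ‖y‖ ^ ((n : ℝ) + 2 * s) = f x) :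
    u₁ = u₂ := by
  exact funext fun x => le_antisymm
    (fd_le n hn s hs Ω hΩb f φ u₁ u₂ h₁cont h₂cont h₁ext h₂ext h₁eq h₂eq x)
    (fd_le n hn s hs Ω hΩb f φ u₂ u₁ h₂cont h₁cont h₂ext h₁ext h₂eq h₁eq x)
end
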